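/- Let f : ℝ^N → (−∞,∞] be proper and closed with inf f > −∞. For each k ∈ ℕ let h_k : ℝ^N → ℝ be convex and differentiable, let m_k : ℝ^N → (−∞,∞] be proper, closed and convex with |f(x) − m_k(x)| ≤ ω(‖x − x^k‖) for all x ∈ ℝ^N, where ω is a growth function, and suppose x̂^k is a global minimizer of m_k + D_{h_k}(·, x^k). Suppose: (i) (x^k) and (ŷ^k) are bounded sequences in ℝ^N; (ii) m_k(ŷ^k) + D_{h_k}(ŷ^k, x^k) ≤ m_k(x̂^k) + D_{h_k}(x̂^k, x^k) + ε_k with ε_k → 0; (iii) Δ_k := m_k(ŷ^k) + D_{h_k}(ŷ^k, x^k) − f(x^k) → 0; and (iv) the Bregman continuity property holds: for all bounded sequences (u^k), (v^k) in ℝ^N, u^k − v^k → 0 if and only if D_{h_k}(u^k, v^k) → 0. Then ŷ^k − x̂^k → 0, x^k − x̂^k → 0, and x^k − ŷ^k → 0 as k → ∞. -/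

import Mathlib

open scoped RealInnerProductSpace
open Filter Topology

/-- The Bregman distance `D_h(x, u) = h x − h u − ⟨∇h u, x − u⟩` associated with `h`. -/
noncomputable def breg {N : ℕ} (h : EuclideanSpace ℝ (Fin N) → ℝ)
    (x u : EuclideanSpace ℝ (Fin N)) : ℝ :=
  h x - h u - ⟪gradient h u, x - u⟫

/-- Convexity for extended-real-valued functions. -/
def ERealConvex {N : ℕ} (f : EuclideanSpace ℝ (Fin N) → EReal) : Prop :=
  ∀ x y : EuclideanSpace ℝ (Fin N), ∀ a b : ℝ, 0 ≤ a → 0 ≤ b → a + b = 1 →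
    f (a • x + b • y) ≤ (a : EReal) * f x + (b : EReal) * f y

/-!
Let `D_k` be the Bregman distance of `h_k` and `p_k` an exact minimizer of `m_k + D_k(·, x_k)`.
Comparing `p_k` with points of the segment towards a competitor `u`, where `m_k` is bounded by its
chord and `D_k(·, x_k)` by its derivative, gives the three-point inequality
`m_k(p_k) + D_k(p_k, x_k) + D_k(u, p_k) ≤ m_k(u) + D_k(u, x_k)`: a competitor whose value is within
`η` of the optimum is within Bregman distance `η` of `p_k`. The inexact point `y_k` is such a
competitor with `η = ε_k`, and, since `m_k(x_k) ≤ f(x_k)`, so is `x_k` with `η = ε_k - Δ_k`. Both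
Bregman distances to `p_k` therefore vanish. The sequence `p_k` is not known to be bounded, but
`D_k(u, ·)` does not increase when its second argument is pulled towards `u`, so `p_k` can be
truncated to the unit ball around `y_k`, respectively `x_k`.
-/

section EReal

theorem exists_coe_of_coe_eq_sub {a b : EReal} {r : ℝ} (ha : a ≠ ⊥) (hr : (r : EReal) = a - b) :
    ∃ s t : ℝ, a = s ∧ b = t ∧ r = s - t := by
  induction a <;> induction b <;> simp_all [← EReal.coe_sub]

theorem ERealConvex.convex_epigraph {N : ℕ} {f : EuclideanSpace ℝ (Fin N) → EReal}
    (hf : ERealConvex f) : Convex ℝ {q : EuclideanSpace ℝ (Fin N) × ℝ | f q.1 ≤ q.2} := by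
  rintro ⟨x, r⟩ hx ⟨y, t⟩ hy a b ha hb hab
  calc f (a • x + b • y) ≤ a * f x + b * f y := hf x y a b ha hb hab
    _ ≤ a * r + b * t := by
      gcongr
      exacts [hx, hy]
    _ = (a • r + b • t : ℝ) := by simp

theorem convexOn_toReal_of_convex_epigraph {E : Type*} [AddCommMonoid E] [Module ℝ E]
    {f : E → EReal} (hbot : ∀ z, f z ≠ ⊥) (hf : Convex ℝ {q : E × ℝ | f q.1 ≤ q.2}) :
    ConvexOn ℝ {z | f z ≠ ⊤} fun z => (f z).toReal := by
  refine convexOn_iff_convex_epigraph.2 ?_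
  convert hf using 1
  ext ⟨z, r⟩
  have := hbot z
  induction hz : f z <;> simp_all

end EReal

section BregmanDist

variable {E : Type*} [NormedAddCommGroup E] [NormedSpace ℝ E] {h : E → ℝ}

/-- The Bregman distance `D_h(x, u) = h x - h u - h'(u) (x - u)` on a normed space, with the Fréchet
derivative in place of the gradient. -/
noncomputable def bregmanDist (h : E → ℝ) (x u : E) : ℝ :=
  h x - h u - fderiv ℝ h u (x - u)

theorem breg_eq_bregmanDist {N : ℕ} (h : EuclideanSpace ℝ (Fin N) → ℝ)
    (x u : EuclideanSpace ℝ (Fin N)) : breg h x u = bregmanDist h x u := by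
  simp [breg, bregmanDist, gradient]

theorem bregmanDist_self (h : E → ℝ) (x : E) : bregmanDist h x x = 0 := by
  simp [bregmanDist]

theorem bregmanDist_three_point (h : E → ℝ) (u v w : E) :
    bregmanDist h u w =
      bregmanDist h u v + bregmanDist h v w + (fderiv ℝ h v - fderiv ℝ h w) (u - v) := by
  simp only [bregmanDist, map_sub, sub_apply]
  ring

theorem bregmanDist_add_bregmanDist_swap (h : E → ℝ) (u v : E) :
    bregmanDist h u v + bregmanDist h v u = (fderiv ℝ h u - fderiv ℝ h v) (u - v) := by
  simp only [bregmanDist, map_sub, sub_apply]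
  ring

theorem hasFDerivAt_bregmanDist_left {p : E} (hp : DifferentiableAt ℝ h p) (x : E) :
    HasFDerivAt (fun u => bregmanDist h u x) (fderiv ℝ h p - fderiv ℝ h x) p :=
  (hp.hasFDerivAt.sub_const (h x)).sub
    ((fderiv ℝ h x).hasFDerivAt.comp p ((hasFDerivAt_id p).sub_const x))

theorem le_add_of_convexOn_of_isMinOn_add {s : Set E} {φ g : E → ℝ} {g' : E →L[ℝ] ℝ} {p u : E}
    (hφ : ConvexOn ℝ s φ) (hg : HasFDerivAt g g' p) (hmin : IsMinOn (fun z => φ z + g z) s p)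
    (hp : p ∈ s) (hu : u ∈ s) : φ p ≤ φ u + g' (u - p) := by
  have hslope := (hg.hasLineDerivAt (u - p)).tendsto_slope_zero_right
  suffices ∀ᶠ t : ℝ in 𝓝[>] 0, φ p - φ u ≤ t⁻¹ • (g (p + t • (u - p)) - g p) by
    linarith [ge_of_tendsto hslope this]
  filter_upwards [Ioo_mem_nhdsGT zero_lt_one] with t ⟨ht₀, ht₁⟩
  have hpt : p + t • (u - p) = (1 - t) • p + t • u := by module
  have hmem : p + t • (u - p) ∈ s :=
    hpt ▸ hφ.1 hp hu (sub_nonneg.2 ht₁.le) ht₀.le (sub_add_cancel 1 t)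
  have hchord : φ (p + t • (u - p)) ≤ (1 - t) * φ p + t * φ u :=
    hpt ▸ hφ.2 hp hu (sub_nonneg.2 ht₁.le) ht₀.le (sub_add_cancel 1 t)
  have hopt : φ p + g p ≤ φ (p + t • (u - p)) + g (p + t • (u - p)) := hmin hmem
  rw [smul_eq_mul, le_inv_mul_iff₀ ht₀]
  linarith

theorem bregmanDist_nonneg {s : Set E} {x u : E} (hc : ConvexOn ℝ s h)
    (hu : DifferentiableAt ℝ h u) (hxs : x ∈ s) (hus : u ∈ s) : 0 ≤ bregmanDist h x u := by
  -- Every point minimizes `h + (-h)`.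
  have hmin : IsMinOn (fun z => h z + (-h) z) s u := fun z _ => by simp
  have := le_add_of_convexOn_of_isMinOn_add hc hu.hasFDerivAt.neg hmin hus hxs
  rw [neg_apply] at this
  unfold bregmanDist
  linarith

theorem bregmanDist_le_of_mem_segment {s : Set E} {u v w : E} (hc : ConvexOn ℝ s h)
    (hdv : DifferentiableAt ℝ h v) (hdw : DifferentiableAt ℝ h w) (hu : u ∈ s) (hw : w ∈ s)
    (hv : v ∈ segment ℝ u w) : bregmanDist h u v ≤ bregmanDist h u w := by
  have hvs : v ∈ s := hc.1.segment_subset hu hw hv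
  have hvw : 0 ≤ bregmanDist h v w := bregmanDist_nonneg hc hdw hvs hw
  have hwv : 0 ≤ bregmanDist h w v := bregmanDist_nonneg hc hdv hw hvs
  have hmono : 0 ≤ (fderiv ℝ h v - fderiv ℝ h w) (v - w) :=
    bregmanDist_add_bregmanDist_swap h v w ▸ add_nonneg hvw hwv
  obtain ⟨a, b, ha, hb, hab, hcomb⟩ := hv
  obtain rfl | ha := ha.eq_or_lt
  · simp [← hcomb, show b = 1 by linarith]
  have hcollinear : u - v = (b / a) • (v - w) := by
    obtain rfl : b = 1 - a := by linarith
    rw [← hcomb]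
    match_scalars <;> field_simp
    ring
  have hcross : 0 ≤ (fderiv ℝ h v - fderiv ℝ h w) (u - v) := by
    rw [hcollinear, map_smul, smul_eq_mul]
    positivity
  linarith [bregmanDist_three_point h u v w]

theorem add_bregmanDist_le_of_isMinOn {s : Set E} {φ : E → ℝ} {p x u : E} (hφ : ConvexOn ℝ s φ)
    (hd : DifferentiableAt ℝ h p) (hmin : IsMinOn (fun z => φ z + bregmanDist h z x) s p)
    (hp : p ∈ s) (hu : u ∈ s) :
    φ p + bregmanDist h p x + bregmanDist h u p ≤ φ u + bregmanDist h u x := by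
  linarith [bregmanDist_three_point h u p x,
    le_add_of_convexOn_of_isMinOn_add hφ (hasFDerivAt_bregmanDist_left hd x) hmin hp hu]

theorem bregmanDist_le_of_add_le {φ : E → EReal} {p x u : E} {η : ℝ} (hbot : ∀ z, φ z ≠ ⊥)
    (hφ : Convex ℝ {q : E × ℝ | φ q.1 ≤ q.2}) (hd : DifferentiableAt ℝ h p)
    (hmin : ∀ z, φ p + bregmanDist h p x ≤ φ z + bregmanDist h z x) (hu : φ u ≠ ⊤)
    (hη : φ u + bregmanDist h u x ≤ φ p + bregmanDist h p x + η) : bregmanDist h u p ≤ η := by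
  have hcoe {z : E} (hz : φ z ≠ ⊤) : φ z = (φ z).toReal := (EReal.coe_toReal hz (hbot z)).symm
  have hp : φ p ≠ ⊤ := fun hp => by
    have := hmin u
    rw [hp, hcoe hu, EReal.top_add_coe, ← EReal.coe_add] at this
    exact EReal.coe_ne_top _ (top_le_iff.1 this)
  have hmin' : IsMinOn (fun z => (φ z).toReal + bregmanDist h z x) {z | φ z ≠ ⊤} p := by
    intro z hz
    have := hmin z
    rw [hcoe hp, hcoe hz] at this
    exact_mod_cast this
  rw [hcoe hp, hcoe hu] at hη
  norm_cast at hη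
  have hconv := convexOn_toReal_of_convex_epigraph hbot hφ
  linarith [add_bregmanDist_le_of_isMinOn hconv hd hmin' hp hu]

end BregmanDist

section Gaps

variable {E ι : Type*} [NormedAddCommGroup E] [NormedSpace ℝ E] {l : Filter ι} {h : ι → E → ℝ}

/-- Sequential consistency of a family of Bregman distances along a filter: for bounded families
`u` and `v`, if `D_{h_k}(u_k, v_k)` tends to `0` then so does `u_k - v_k`. -/
def BregmanConsistent (h : ι → E → ℝ) (l : Filter ι) : Prop :=
  ∀ u v : ι → E, (∃ C, ∀ k, ‖u k‖ ≤ C) → (∃ C, ∀ k, ‖v k‖ ≤ C) →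
    Tendsto (fun k => bregmanDist (h k) (u k) (v k)) l (𝓝 0) →
    Tendsto (fun k => u k - v k) l (𝓝 0)

theorem exists_mem_segment_norm_sub_le {r : ℝ} (hr : 0 ≤ r) (u w : E) :
    ∃ v ∈ segment ℝ u w, ‖u - v‖ ≤ r ∧ (‖u - v‖ < r → v = w) := by
  obtain hle | hlt := le_or_gt ‖w - u‖ r
  · exact ⟨w, right_mem_segment ℝ u w, by rwa [norm_sub_rev], fun _ => rfl⟩
  · have hpos : 0 < ‖w - u‖ := hr.trans_lt hlt
    have hnorm : ‖u - (u + (r / ‖w - u‖) • (w - u))‖ = r := by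
      rw [sub_add_cancel_left, norm_neg, norm_smul, Real.norm_of_nonneg (by positivity),
        div_mul_cancel₀ _ hpos.ne']
    refine ⟨u + (r / ‖w - u‖) • (w - u), ?_, hnorm.le, fun h => absurd hnorm h.ne⟩
    rw [segment_eq_image']
    exact ⟨_, ⟨by positivity, div_le_one_of_le₀ hlt.le hpos.le⟩, rfl⟩

theorem BregmanConsistent.tendsto_sub (hcons : BregmanConsistent h l)
    (hc : ∀ k, ConvexOn ℝ Set.univ (h k)) (hd : ∀ k, Differentiable ℝ (h k)) {u w : ι → E}
    (hu : ∃ C, ∀ k, ‖u k‖ ≤ C) (hD : Tendsto (fun k => bregmanDist (h k) (u k) (w k)) l (𝓝 0)) :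
    Tendsto (fun k => u k - w k) l (𝓝 0) := by
  choose v hv_mem hv_norm hv_eq using
    fun k => exists_mem_segment_norm_sub_le zero_le_one (u k) (w k)
  have hv : ∃ C, ∀ k, ‖v k‖ ≤ C := by
    obtain ⟨C, hC⟩ := hu
    exact ⟨C + 1, fun k => (norm_le_norm_add_norm_sub' _ _).trans (add_le_add (hC k)
      (norm_sub_rev (v k) (u k) ▸ hv_norm k))⟩
  have hDv : Tendsto (fun k => bregmanDist (h k) (u k) (v k)) l (𝓝 0) :=
    squeeze_zero
      (fun k => bregmanDist_nonneg (hc k) (hd k _) (Set.mem_univ _) (Set.mem_univ _))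
      (fun k => bregmanDist_le_of_mem_segment (hc k) (hd k _) (hd k _) (Set.mem_univ _)
        (Set.mem_univ _) (hv_mem k)) hD
  have huv : Tendsto (fun k => u k - v k) l (𝓝 0) := hcons u v hu hv hDv
  have hlt : ∀ᶠ k in l, ‖u k - v k‖ < 1 :=
    huv.norm.eventually_lt_const (by simp)
  exact huv.congr' (hlt.mono fun k hk => by rw [hv_eq k hk])

theorem iterate_gaps_vanish_general {f : E → EReal} {x y p : ι → E} {m : ι → E → EReal}
    {ε Δ : ι → ℝ} (hc : ∀ k, ConvexOn ℝ Set.univ (h k)) (hd : ∀ k, Differentiable ℝ (h k))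
    (hbot : ∀ k z, m k z ≠ ⊥) (hm : ∀ k, Convex ℝ {q : E × ℝ | m k q.1 ≤ q.2})
    (hle : ∀ k, m k (x k) ≤ f (x k))
    (hmin : ∀ k u, m k (p k) + bregmanDist (h k) (p k) (x k) ≤ m k u + bregmanDist (h k) u (x k))
    (hx : ∃ C, ∀ k, ‖x k‖ ≤ C) (hy : ∃ C, ∀ k, ‖y k‖ ≤ C) (hε : Tendsto ε l (𝓝 0))
    (hinexact : ∀ k, m k (y k) + bregmanDist (h k) (y k) (x k) ≤
      m k (p k) + bregmanDist (h k) (p k) (x k) + ε k)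
    (hΔ_def : ∀ k, (Δ k : EReal) = m k (y k) + bregmanDist (h k) (y k) (x k) - f (x k))
    (hΔ : Tendsto Δ l (𝓝 0)) (hcons : BregmanConsistent h l) :
    Tendsto (fun k => y k - p k) l (𝓝 0) ∧
    Tendsto (fun k => x k - p k) l (𝓝 0) ∧
    Tendsto (fun k => x k - y k) l (𝓝 0) := by
  have hnonneg (u : ι → E) (k : ι) : 0 ≤ bregmanDist (h k) (u k) (p k) :=
    bregmanDist_nonneg (hc k) (hd k _) (Set.mem_univ _) (Set.mem_univ _)
  choose A F hA hF hAF using fun k => exists_coe_of_coe_eq_sub (by simp [hbot]) (hΔ_def k)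
  have hDy (k : ι) : bregmanDist (h k) (y k) (p k) ≤ ε k := by
    refine bregmanDist_le_of_add_le (hbot k) (hm k) (hd k _) (hmin k) (fun htop => ?_) (hinexact k)
    simpa [htop] using hA k
  have hDx (k : ι) : bregmanDist (h k) (x k) (p k) ≤ ε k - Δ k := by
    have hmx : m k (x k) ≤ F k := hF k ▸ hle k
    refine bregmanDist_le_of_add_le (hbot k) (hm k) (hd k _) (hmin k)
      (hmx.trans_lt (EReal.coe_lt_top _)).ne ?_
    calc m k (x k) + bregmanDist (h k) (x k) (x k) = m k (x k) := by simp [bregmanDist_self]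
      _ ≤ F k := hmx
      _ = A k + (-Δ k : ℝ) := by rw [hAF k, ← EReal.coe_add]; ring_nf
      _ ≤ m k (p k) + bregmanDist (h k) (p k) (x k) + ε k + (-Δ k : ℝ) := by
        gcongr
        exact hA k ▸ hinexact k
      _ = m k (p k) + bregmanDist (h k) (p k) (x k) + (ε k - Δ k : ℝ) := by
        rw [add_assoc, ← EReal.coe_add, sub_eq_add_neg]
  have hyp : Tendsto (fun k => y k - p k) l (𝓝 0) :=
    hcons.tendsto_sub hc hd hy (squeeze_zero (hnonneg y) hDy hε)
  have hxp : Tendsto (fun k => x k - p k) l (𝓝 0) :=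
    hcons.tendsto_sub hc hd hx (squeeze_zero (hnonneg x) hDx (by simpa using hε.sub hΔ))
  exact ⟨hyp, hxp, by simpa using hxp.sub hyp⟩

end Gaps

/-- **Vanishing distances between iterates, inexact and exact proximal points.** -/
theorem iterate_gaps_vanish (N : ℕ)
    (f : EuclideanSpace ℝ (Fin N) → EReal)
    (hfbot : ∀ z, f z ≠ ⊥) (hfproper : ∃ z, f z ≠ ⊤)
    (hfclosed : LowerSemicontinuous f) (hfinf : ⊥ < ⨅ z, f z)
    (x yh xh : ℕ → EuclideanSpace ℝ (Fin N))
    (h : ℕ → EuclideanSpace ℝ (Fin N) → ℝ)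
    (hhconv : ∀ k, ConvexOn ℝ Set.univ (h k)) (hhdiff : ∀ k, Differentiable ℝ (h k))
    (m : ℕ → EuclideanSpace ℝ (Fin N) → EReal)
    (hmbot : ∀ k z, m k z ≠ ⊥) (hmproper : ∀ k, ∃ z, m k z ≠ ⊤)
    (hmclosed : ∀ k, LowerSemicontinuous (m k)) (hmconv : ∀ k, ERealConvex (m k))
    (ω : ℝ → ℝ) (hω0 : ω 0 = 0) (hωnn : ∀ t, 0 ≤ t → 0 ≤ ω t)
    (hωgrowth : Tendsto (fun t => ω t / t) (𝓝[>] (0:ℝ)) (𝓝 0))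
    (hmodel : ∀ k z, f z - m k z ≤ ((ω ‖z - x k‖ : ℝ) : EReal) ∧
                     m k z - f z ≤ ((ω ‖z - x k‖ : ℝ) : EReal))
    (hmin : ∀ k u, m k (xh k) + ((breg (h k) (xh k) (x k) : ℝ) : EReal) ≤
                   m k u + ((breg (h k) u (x k) : ℝ) : EReal))
    -- (i) boundedness
    (hxbdd : ∃ C, ∀ k, ‖x k‖ ≤ C) (hybdd : ∃ C, ∀ k, ‖yh k‖ ≤ C)
    -- (ii) inexactness vanishes
    (ε : ℕ → ℝ) (hε : Tendsto ε atTop (𝓝 0))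
    (hinexact : ∀ k, m k (yh k) + ((breg (h k) (yh k) (x k) : ℝ) : EReal) ≤
      m k (xh k) + ((breg (h k) (xh k) (x k) : ℝ) : EReal) + ((ε k : ℝ) : EReal))
    -- (iii) model improvement vanishes
    (Δ : ℕ → ℝ)
    (hΔdef : ∀ k, ((Δ k : ℝ) : EReal) =
      m k (yh k) + ((breg (h k) (yh k) (x k) : ℝ) : EReal) - f (x k))
    (hΔ : Tendsto Δ atTop (𝓝 0))
    -- (iv) Bregman continuity
    (hbregcont : ∀ u v : ℕ → EuclideanSpace ℝ (Fin N),
      (∃ C, ∀ k, ‖u k‖ ≤ C) → (∃ C, ∀ k, ‖v k‖ ≤ C) →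
      (Tendsto (fun k => u k - v k) atTop (𝓝 0) ↔
        Tendsto (fun k => breg (h k) (u k) (v k)) atTop (𝓝 0))) :
    Tendsto (fun k => yh k - xh k) atTop (𝓝 0) ∧
    Tendsto (fun k => x k - xh k) atTop (𝓝 0) ∧
    Tendsto (fun k => x k - yh k) atTop (𝓝 0) := by
  simp only [breg_eq_bregmanDist] at hmin hinexact hΔdef hbregcont
  exact iterate_gaps_vanish_general hhconv hhdiff hmbot (fun k => (hmconv k).convex_epigraph)
    (fun k => EReal.sub_nonpos.1 (by simpa [hω0] using (hmodel k (x k)).2)) hmin hxbdd hybdd hε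
    hinexact hΔdef hΔ fun u v hu hv => (hbregcont u v hu hv).2
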